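/- Let σ ∈ S_n, X ∈ ℂ^n, and T(L) = T_σ(X). Let 1 ≤ r < s ≤ n with A_σ(s,r) = 1, and let i_r, i_{r+1}, …, i_{s−1} be integers with 1 ≤ i_t ≤ t for each r ≤ t ≤ s−1. Then the array L' obtained from T_σ(X) by adding 1 to each entry (t, i_t) for r ≤ t ≤ s−1 does not satisfy the graph G_σ; that is, there exist 1 ≤ i < k ≤ n such that either A_σ(k,i) = 1 and l'_{k,i} − l'_{k−1,i} ∉ ℤ_{≥0}, or A_σ(k,i) = −1 and l'_{k−1,i} − l'_{k,i} ∉ ℤ_{>0}. -/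

import Mathlib

/-- The orientation function `A_σ` of the graph `G_σ`:
`A_σ(r,s) = 1` if `σ⁻¹(r) > σ⁻¹(s)` and `A_σ(r,s) = -1` otherwise. -/
def Aperm (σ : Equiv.Perm ℕ) (r s : ℕ) : ℤ :=
  if σ.symm s < σ.symm r then 1 else -1

/-- The Gelfand–Tsetlin tableau `T_σ(X)`: `tab n σ x k i` is the entry `y_{k,i}` in
row `k`, column `i`; row `n` is `x` and `y_{k-1,i} = y_{k,i} + (1 - A_σ(k,i))/2`. -/
noncomputable def tab (n : ℕ) (σ : Equiv.Perm ℕ) (x : ℕ → ℂ) (k i : ℕ) : ℂ :=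
  if h : n ≤ k then x i
  else tab n σ x (k + 1) i + (1 - (Aperm σ (k + 1) i : ℂ)) / 2
termination_by n - k
decreasing_by omega

/-- The array obtained from `T_σ(X)` by adding `ε` to the entry `(t, idx t)` for each
`r ≤ t ≤ s - 1`. -/
noncomputable def shiftedTab (n : ℕ) (σ : Equiv.Perm ℕ) (x : ℕ → ℂ) (r s : ℕ)
    (idx : ℕ → ℕ) (ε : ℂ) (k i : ℕ) : ℂ :=
  tab n σ x k i + if r ≤ k ∧ k ≤ s - 1 ∧ i = idx k then ε else 0

/-!
Rows `k` and `k + 1` of `T_σ(X)` have the smallest difference that `G_σ` allows. If `-ε` is not a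
natural number, it follows that a shift by `ε` of the entry `(k, i)` alone forces
`A_σ(k + 1, i) = -1`, and a shift of `(k + 1, i)` alone forces `A_σ(k + 1, i) = 1`.
When every row `t` from `r` to `s - 1` has a single shifted entry `i_t`, this
orders the positions `p = σ⁻¹`: `p(i_r) ≤ p(r)` at the bottom, `p(i_{t+1}) ≤ p(t + 1) ≤ p(i_t)`
whenever `i_t ≠ i_{t+1}`, and `p(s) ≤ p(i_{s-1})` at the top. Hence
`p(s) ≤ p(i_{s-1}) ≤ ⋯ ≤ p(i_r) ≤ p(r)`, which says that `A_σ(s, r) = -1`.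
-/

/-- The array `l`, with entry `l k i` in row `k` and column `i`, satisfies the graph `G_σ` in the
rows `1, …, n`. Entries with `i = 0` or `k < i` lie outside the triangular array and are
unconstrained. -/
def SatisfiesGraph (n : ℕ) (σ : Equiv.Perm ℕ) (l : ℕ → ℕ → ℂ) : Prop :=
  ∀ i k : ℕ, 1 ≤ i → i < k → k ≤ n →
    (Aperm σ k i = 1 → ∃ m : ℕ, l k i - l (k - 1) i = m) ∧
    (Aperm σ k i = -1 → ∃ m : ℕ, l (k - 1) i - l k i = m + 1)

section Tableau

variable {n : ℕ} {σ : Equiv.Perm ℕ} {x : ℕ → ℂ}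

theorem Aperm_eq_one_iff {r s : ℕ} : Aperm σ r s = 1 ↔ σ.symm s < σ.symm r := by
  simp [Aperm]

theorem Aperm_eq_neg_one_iff {r s : ℕ} : Aperm σ r s = -1 ↔ σ.symm r ≤ σ.symm s := by
  simp [Aperm]

theorem tab_eq_tab_succ_add {k : ℕ} (hk : k < n) (i : ℕ) :
    tab n σ x k i = tab n σ x (k + 1) i + (1 - (Aperm σ (k + 1) i : ℂ)) / 2 := by
  rw [tab, dif_neg hk.not_ge]

theorem tab_eq_tab_succ {k i : ℕ} (hk : k < n) (hp : σ.symm i < σ.symm (k + 1)) :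
    tab n σ x k i = tab n σ x (k + 1) i := by
  rw [tab_eq_tab_succ_add hk, Aperm_eq_one_iff.mpr hp]
  norm_num

theorem tab_eq_tab_succ_add_one {k i : ℕ} (hk : k < n) (hp : σ.symm (k + 1) ≤ σ.symm i) :
    tab n σ x k i = tab n σ x (k + 1) i + 1 := by
  rw [tab_eq_tab_succ_add hk, Aperm_eq_neg_one_iff.mpr hp]
  norm_num

end Tableau

namespace SatisfiesGraph

variable {n : ℕ} {σ : Equiv.Perm ℕ} {x : ℕ → ℂ} {l : ℕ → ℕ → ℂ} {ε : ℂ} {k i : ℕ}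

theorem symm_succ_le_of_eq_tab_add (h : SatisfiesGraph n σ l) (hε : ∀ m : ℕ, ε ≠ -m)
    (hk : k < n) (hi : i ∈ Set.Icc 1 k) (hlow : l k i = tab n σ x k i + ε)
    (hup : l (k + 1) i = tab n σ x (k + 1) i) : σ.symm (k + 1) ≤ σ.symm i := by
  by_contra! hp
  obtain ⟨m, hm⟩ := (h i (k + 1) hi.1 (Nat.lt_succ_of_le hi.2) hk).1 (Aperm_eq_one_iff.mpr hp)
  rw [Nat.add_sub_cancel, hlow, hup, tab_eq_tab_succ hk hp] at hm
  exact hε m (by linear_combination -hm)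

theorem symm_lt_of_eq_tab (h : SatisfiesGraph n σ l) (hε : ∀ m : ℕ, ε ≠ -m)
    (hk : k < n) (hi : i ∈ Set.Icc 1 k) (hlow : l k i = tab n σ x k i)
    (hup : l (k + 1) i = tab n σ x (k + 1) i + ε) : σ.symm i < σ.symm (k + 1) := by
  by_contra! hp
  obtain ⟨m, hm⟩ := (h i (k + 1) hi.1 (Nat.lt_succ_of_le hi.2) hk).2 (Aperm_eq_neg_one_iff.mpr hp)
  rw [Nat.add_sub_cancel, hlow, hup, tab_eq_tab_succ_add_one hk hp] at hm
  exact hε m (by linear_combination -hm)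

end SatisfiesGraph

section ShiftedTab

variable {n : ℕ} {σ : Equiv.Perm ℕ} {x : ℕ → ℂ} {r s : ℕ} {idx : ℕ → ℕ} {ε : ℂ} {k : ℕ}

theorem shiftedTab_idx (hk : k ∈ Set.Ico r s) :
    shiftedTab n σ x r s idx ε k (idx k) = tab n σ x k (idx k) + ε := by
  rw [shiftedTab, if_pos ⟨hk.1, Nat.le_sub_one_of_lt hk.2, rfl⟩]

theorem shiftedTab_of_ne_idx {i : ℕ} (hi : i ≠ idx k) :
    shiftedTab n σ x r s idx ε k i = tab n σ x k i := by
  rw [shiftedTab, if_neg fun h => hi h.2.2, add_zero]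

theorem shiftedTab_of_lt (hk : k < r) (i : ℕ) :
    shiftedTab n σ x r s idx ε k i = tab n σ x k i := by
  rw [shiftedTab, if_neg fun h => hk.not_ge h.1, add_zero]

theorem shiftedTab_of_sub_one_lt (hk : s - 1 < k) (i : ℕ) :
    shiftedTab n σ x r s idx ε k i = tab n σ x k i := by
  rw [shiftedTab, if_neg fun h => hk.not_ge h.2.1, add_zero]

namespace SatisfiesGraph

theorem symm_idx_left_le (h : SatisfiesGraph n σ (shiftedTab n σ x r s idx ε))
    (hε : ∀ m : ℕ, ε ≠ -m) (hrs : r < s) (hs : s ≤ n) (hidx : idx r ∈ Set.Icc 1 r) :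
    σ.symm (idx r) ≤ σ.symm r := by
  obtain hr | hr := hidx.2.eq_or_lt
  · rw [hr]
  obtain ⟨k, rfl⟩ := Nat.exists_eq_add_one_of_ne_zero (Nat.ne_zero_of_lt hr)
  exact (h.symm_lt_of_eq_tab hε (by lia) ⟨hidx.1, Nat.le_of_lt_succ hr⟩
    (shiftedTab_of_lt k.lt_succ_self _) (shiftedTab_idx ⟨le_rfl, hrs⟩)).le

theorem symm_idx_succ_le_symm_idx (h : SatisfiesGraph n σ (shiftedTab n σ x r s idx ε))
    (hε : ∀ m : ℕ, ε ≠ -m) (hs : s ≤ n) (hk : k ∈ Set.Ico r s) (hk' : k + 1 ∈ Set.Ico r s)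
    (hidx : idx k ∈ Set.Icc 1 k) (hidx' : idx (k + 1) ∈ Set.Icc 1 (k + 1)) :
    σ.symm (idx (k + 1)) ≤ σ.symm (idx k) := by
  obtain heq | hne := eq_or_ne (idx (k + 1)) (idx k)
  · rw [heq]
  have hkn : k < n := hk.2.trans_le hs
  calc
    σ.symm (idx (k + 1)) ≤ σ.symm (k + 1) := by
      obtain hlast | hlt := hidx'.2.eq_or_lt
      · rw [hlast]
      · exact (h.symm_lt_of_eq_tab hε hkn ⟨hidx'.1, Nat.le_of_lt_succ hlt⟩
          (shiftedTab_of_ne_idx hne) (shiftedTab_idx hk')).le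
    _ ≤ σ.symm (idx k) :=
      h.symm_succ_le_of_eq_tab_add hε hkn hidx (shiftedTab_idx hk) (shiftedTab_of_ne_idx hne.symm)

theorem antitoneOn_symm_idx (h : SatisfiesGraph n σ (shiftedTab n σ x r s idx ε))
    (hε : ∀ m : ℕ, ε ≠ -m) (hs : s ≤ n) (hidx : ∀ t ∈ Set.Ico r s, idx t ∈ Set.Icc 1 t) :
    AntitoneOn (fun t => σ.symm (idx t)) (Set.Ico r s) :=
  antitoneOn_of_add_one_le Set.ordConnected_Ico fun t _ ht ht' =>
    h.symm_idx_succ_le_symm_idx hε hs ht ht' (hidx t ht) (hidx (t + 1) ht')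

theorem symm_right_le_symm_idx (h : SatisfiesGraph n σ (shiftedTab n σ x r s idx ε))
    (hε : ∀ m : ℕ, ε ≠ -m) (hrs : r < s) (hs : s ≤ n)
    (hidx : idx (s - 1) ∈ Set.Icc 1 (s - 1)) : σ.symm s ≤ σ.symm (idx (s - 1)) := by
  obtain ⟨k, rfl⟩ := Nat.exists_eq_add_one_of_ne_zero (Nat.ne_zero_of_lt hrs)
  rw [Nat.add_sub_cancel] at hidx ⊢
  exact h.symm_succ_le_of_eq_tab_add hε hs hidx
    (shiftedTab_idx ⟨Nat.le_of_lt_succ hrs, k.lt_succ_self⟩)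
    (shiftedTab_of_sub_one_lt k.lt_succ_self _)

end SatisfiesGraph

end ShiftedTab

theorem stmt9_general {n : ℕ} {σ : Equiv.Perm ℕ} {x : ℕ → ℂ} {r s : ℕ} {idx : ℕ → ℕ} {ε : ℂ}
    (hε : ∀ m : ℕ, ε ≠ -m) (hrs : r < s) (hs : s ≤ n) (hA : Aperm σ s r = 1)
    (hidx : ∀ t ∈ Set.Ico r s, idx t ∈ Set.Icc 1 t) :
    ¬SatisfiesGraph n σ (shiftedTab n σ x r s idx ε) := by
  intro h
  have hbot : r ∈ Set.Ico r s := ⟨le_rfl, hrs⟩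
  have htop : s - 1 ∈ Set.Ico r s := ⟨by lia, by lia⟩
  have hsr : σ.symm s ≤ σ.symm r :=
    calc
      σ.symm s ≤ σ.symm (idx (s - 1)) := h.symm_right_le_symm_idx hε hrs hs (hidx _ htop)
      _ ≤ σ.symm (idx r) := h.antitoneOn_symm_idx hε hs hidx hbot htop htop.1
      _ ≤ σ.symm r := h.symm_idx_left_le hε hrs hs (hidx r hbot)
  exact (Aperm_eq_one_iff.mp hA).not_ge hsr

/-- if `A_σ(s,r) = 1`, the tableau obtained from `T_σ(X)` by adding `1`
to the entries `(t, i_t)`, `r ≤ t ≤ s-1`, does not satisfy `G_σ`. -/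
theorem stmt9 (n : ℕ) (hn : 2 ≤ n) (σ : Equiv.Perm ℕ)
    (hσ : ∀ i ∉ Set.Icc 1 n, σ i = i) (x : ℕ → ℂ) (r s : ℕ)
    (hr : 1 ≤ r) (hrs : r < s) (hs : s ≤ n) (hA : Aperm σ s r = 1)
    (idx : ℕ → ℕ) (hidx : ∀ t : ℕ, r ≤ t → t ≤ s - 1 → 1 ≤ idx t ∧ idx t ≤ t) :
    ∃ i k : ℕ, 1 ≤ i ∧ i < k ∧ k ≤ n ∧
      ((Aperm σ k i = 1 ∧
          ¬∃ m : ℕ, shiftedTab n σ x r s idx 1 k i -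
              shiftedTab n σ x r s idx 1 (k - 1) i = (m : ℂ)) ∨
       (Aperm σ k i = -1 ∧
          ¬∃ m : ℕ, shiftedTab n σ x r s idx 1 (k - 1) i -
              shiftedTab n σ x r s idx 1 k i = (m : ℂ) + 1)) := by
  by_contra! h
  exact stmt9_general (fun m => by norm_cast; lia) hrs hs hA
    (fun t ht => hidx t ht.1 (Nat.le_sub_one_of_lt ht.2)) h
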